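/- arXiv:2307.11739 — 2 statements merged into one kernel-verified Lean document; each statement's English description precedes it below -/
import Mathlib

section
/- (Aperiodicity of products of cosines with incommensurable frequencies.) Let n ≥ 1 and let a : Fin n → ℝ with a i ≠ 0 for every i. Suppose there exist indices i, j such that the ratio (a i) / (a j) is irrational. Then the function f : ℝ → ℝ given by f(t) = |∏_{k} cos(a k · t)| is not periodic: there is no T > 0 with f(t + T) = f(t) for all t ∈ ℝ. -/
open scoped BigOperators

/-! The function `t ↦ |∏ k, cos (a k * t)|` attains its maximum `1` exactly where every factor is
`±1`, that is, where every `a k * t` is an integer multiple of `π`. The value at `0` is `1`, so a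
period `T` is such a point, and then `a i / a j = (a i * T) / (a j * T)` is a quotient of
integers. -/

theorem prod_eq_one_iff_of_nonneg_of_le_one {ι R : Type*} [CommMonoidWithZero R] [PartialOrder R]
    [ZeroLEOneClass R] [PosMulMono R] {s : Finset ι} {f : ι → R} (h0 : ∀ i ∈ s, 0 ≤ f i)
    (h1 : ∀ i ∈ s, f i ≤ 1) : ∏ i ∈ s, f i = 1 ↔ ∀ i ∈ s, f i = 1 := by
  refine ⟨fun hprod i hi ↦ le_antisymm (h1 i hi) ?_, Finset.prod_eq_one⟩
  calc
    1 = ∏ j ∈ s, f j := hprod.symm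
    _ ≤ ∏ j ∈ {i}, f j :=
      Finset.prod_le_prod_of_subset_of_le_one (Finset.singleton_subset_iff.2 hi) h0
        fun j hj _ ↦ h1 j hj
    _ = f i := Finset.prod_singleton f i

theorem not_irrational_div_of_int_mul_eq {x y c : ℝ} {p q : ℤ} (hc : c ≠ 0) (hp : p * c = x)
    (hq : q * c = y) : ¬ Irrational (x / y) := by
  rw [← hp, ← hq, mul_div_mul_right _ _ hc]
  exact fun h ↦ q.not_irrational (h.of_intCast_div p)

section AbsProdCos

variable {ι : Type*} {s : Finset ι}

theorem abs_prod_cos_eq_one_iff {x : ι → ℝ} :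
    |∏ k ∈ s, Real.cos (x k)| = 1 ↔ ∀ k ∈ s, ∃ m : ℤ, m * Real.pi = x k := by
  rw [Finset.abs_prod, prod_eq_one_iff_of_nonneg_of_le_one (fun _ _ ↦ abs_nonneg _)
    fun _ _ ↦ Real.abs_cos_le_one _]
  simp only [Real.abs_cos_eq_one_iff]

variable {a : ι → ℝ} {T : ℝ}

theorem exists_int_mul_pi_eq_of_periodic_abs_prod_cos
    (hper : Function.Periodic (fun t ↦ |∏ k ∈ s, Real.cos (a k * t)|) T) :
    ∀ k ∈ s, ∃ m : ℤ, m * Real.pi = a k * T := by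
  refine abs_prod_cos_eq_one_iff.1 ?_
  calc
    |∏ k ∈ s, Real.cos (a k * T)| = |∏ k ∈ s, Real.cos (a k * 0)| := hper.eq
    _ = 1 := by simp

theorem abs_prod_cos_not_periodic_general (hirr : ∃ i ∈ s, ∃ j ∈ s, Irrational (a i / a j))
    (hT : T ≠ 0) : ¬ Function.Periodic (fun t ↦ |∏ k ∈ s, Real.cos (a k * t)|) T := by
  intro hper
  obtain ⟨i, hi, j, hj, hij⟩ := hirr
  obtain ⟨p, hp⟩ := exists_int_mul_pi_eq_of_periodic_abs_prod_cos hper i hi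
  obtain ⟨q, hq⟩ := exists_int_mul_pi_eq_of_periodic_abs_prod_cos hper j hj
  rw [← mul_div_mul_right _ _ hT] at hij
  exact not_irrational_div_of_int_mul_eq Real.pi_ne_zero hp hq hij

end AbsProdCos

/-- aperiodicity of products of cosines with incommensurable frequencies:
if all frequencies `a k` are nonzero and some ratio `a i / a j` is irrational, then
`t ↦ |∏_k cos(a k · t)|` is not periodic. -/
theorem abs_prod_cos_not_periodic (n : ℕ) (hn : 1 ≤ n) (a : Fin n → ℝ)
    (ha : ∀ i, a i ≠ 0) (hirr : ∃ i j : Fin n, Irrational (a i / a j)) :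
    ¬ ∃ T > (0 : ℝ), ∀ t : ℝ,
        |∏ k : Fin n, Real.cos (a k * (t + T))| =
        |∏ k : Fin n, Real.cos (a k * t)| := by
  rintro ⟨T, hT, hper⟩
  exact abs_prod_cos_not_periodic_general (by simpa using hirr) hT.ne' hper
end

section
/- (Computational-basis measurement on a WGS, outcome |1⟩, and local-unitary equivalence.) Let N ≥ 2, let φ : Fin N → Fin N → ℝ be symmetric with zero diagonal, fix a site k : Fin N, and let φ' i j = φ (k.succAbove i) (k.succAbove j) be the restricted weights. Then for every configuration a : Fin (N−1) → Bool of the remaining qubits, c_φ(the N-qubit configuration obtained from a by inserting the value true at position k) = 2^{−1/2} · ( ∏_{l : Fin (N−1)} exp(−i · φ (k.succAbove l) k · [a l]) ) · c_{φ'}(a). Consequently the renormalized post-measurement state for outcome true is obtained from the (N−1)-qubit weighted graph state with weights φ' by applying to each remaining qubit l the diagonal single-qubit unitary diag(1, exp(−i·φ (k.succAbove l) k)); in particular the post-measurement states for the two outcomes are related by a tensor product of single-qubit diagonal unitaries. -/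
open scoped BigOperators

noncomputable section

/-- indicator of a Boolean value: `[b] = 1` if `b = true`, else `0`. -/
def ind (b : Bool) : ℝ := if b then 1 else 0

/-- Coefficient of the `N`-qubit weighted graph state with weights `φ`. -/
def wgsCoeff (N : ℕ) (φ : Fin N → Fin N → ℝ) (a : Fin N → Bool) : ℂ :=
  (((2 : ℝ) ^ (-(N : ℝ) / 2) : ℝ) : ℂ) *
    Complex.exp (-(Complex.I) *
      ((∑ i : Fin N, ∑ j : Fin N, if i < j then φ i j * ind (a i) * ind (a j) else 0 : ℝ) : ℂ))

/-!
The exponent of a weighted graph state is a sum over pairs of qubits. Fixing the value `x` of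
qubit `k` turns the pairs containing `k` into a function that is linear in the indicators of the
other qubits, so its exponential factors into one-qubit phases; the remaining pairs are exactly
those of the weighted graph state with the restricted weights.
-/

/-- The real phase `Φ` of a weighted graph state, normalized so that the coefficient at `a` is
`2^{-N/2} e^{-iΦ(a)}`: the total weight of the pairs of qubits which are both `1` in `a`. -/
def wgsPhase {N : ℕ} (φ : Fin N → Fin N → ℝ) (a : Fin N → Bool) : ℝ :=
  ∑ i, ∑ j, if i < j then φ i j * ind (a i) * ind (a j) else 0

lemma wgsCoeff_eq_mul_exp_wgsPhase {N : ℕ} (φ : Fin N → Fin N → ℝ) (a : Fin N → Bool) :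
    wgsCoeff N φ a =
      (((2 : ℝ) ^ (-(N : ℝ) / 2) : ℝ) : ℂ) * Complex.exp (-Complex.I * (wgsPhase φ a : ℂ)) :=
  rfl

lemma ind_true : ind true = 1 := if_pos rfl

lemma sum_sum_ite_lt_succAbove {M : Type*} [AddCommMonoid M] {n : ℕ}
    (f : Fin (n + 1) → Fin (n + 1) → M) (k : Fin (n + 1)) (hk : ∀ i, f i k = f k i) :
    (∑ i, ∑ j, if i < j then f i j else 0) =
      (∑ l, f (k.succAbove l) k) +
        ∑ i, ∑ j, if i < j then f (k.succAbove i) (k.succAbove j) else 0 := by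
  have pair_eq (l : Fin n) :
      ((if k < k.succAbove l then f k (k.succAbove l) else 0) +
        if k.succAbove l < k then f (k.succAbove l) k else 0) = f (k.succAbove l) k := by
    rcases lt_or_gt_of_ne (Fin.succAbove_ne k l) with h | h
    · rw [if_neg h.not_gt, if_pos h, zero_add]
    · rw [if_pos h, if_neg h.not_gt, add_zero, hk]
  simp only [Fin.sum_univ_succAbove _ k, lt_irrefl, if_false, zero_add,
    Fin.succAbove_lt_succAbove_iff, Finset.sum_add_distrib]
  rw [← add_assoc, ← Finset.sum_add_distrib]
  simp only [pair_eq]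

lemma sqrt_one_div_eq_rpow {x : ℝ} (hx : 0 ≤ x) : √(1 / x) = x ^ (-(1 : ℝ) / 2) := by
  rw [Real.sqrt_eq_rpow, one_div, Real.inv_rpow hx, ← Real.rpow_neg hx, neg_div]

lemma rpow_neg_natCast_succ_div_two {x : ℝ} (hx : 0 < x) (n : ℕ) :
    x ^ (-((n + 1 : ℕ) : ℝ) / 2) = x ^ (-(1 : ℝ) / 2) * x ^ (-(n : ℝ) / 2) := by
  rw [← Real.rpow_add hx]
  congr 1
  push_cast
  ring

/-- The diagonal entry at `a` of the tensor product of the one-qubit unitaries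
`diag(1, e^{-i θ l})`. -/
def localPhase {ι : Type*} [Fintype ι] (θ : ι → ℝ) (a : ι → Bool) : ℂ :=
  ∏ l, Complex.exp (-Complex.I * ((θ l * ind (a l) : ℝ) : ℂ))

lemma localPhase_eq_exp_sum {ι : Type*} [Fintype ι] (θ : ι → ℝ) (a : ι → Bool) :
    localPhase θ a = Complex.exp (-Complex.I * ((∑ l, θ l * ind (a l) : ℝ) : ℂ)) := by
  rw [localPhase, ← Complex.exp_sum, ← Finset.mul_sum, Complex.ofReal_sum]

section Measurement

variable {n : ℕ} (φ : Fin (n + 1) → Fin (n + 1) → ℝ) {k : Fin (n + 1)}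

lemma wgsPhase_insertNth (hk : ∀ i, φ i k = φ k i) (x : Bool) (a : Fin n → Bool) :
    wgsPhase φ (k.insertNth x a) =
      (∑ l, φ (k.succAbove l) k * ind x * ind (a l)) +
        wgsPhase (fun i j => φ (k.succAbove i) (k.succAbove j)) a := by
  unfold wgsPhase
  rw [sum_sum_ite_lt_succAbove _ k fun i => by rw [hk]; ring]
  simp only [Fin.insertNth_apply_same, Fin.insertNth_apply_succAbove, mul_right_comm _ (ind x)]

lemma wgsCoeff_insertNth (hk : ∀ i, φ i k = φ k i) (x : Bool) (a : Fin n → Bool) :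
    wgsCoeff (n + 1) φ (k.insertNth x a) =
      (((2 : ℝ) ^ (-(1 : ℝ) / 2) : ℝ) : ℂ) *
        localPhase (fun l => φ (k.succAbove l) k * ind x) a *
        wgsCoeff n (fun i j => φ (k.succAbove i) (k.succAbove j)) a := by
  simp only [wgsCoeff_eq_mul_exp_wgsPhase, localPhase_eq_exp_sum]
  rw [wgsPhase_insertNth φ hk, rpow_neg_natCast_succ_div_two two_pos, Complex.ofReal_add,
    mul_add, Complex.exp_add, Complex.ofReal_mul]
  ring

/-- Both outcomes are covered: outcome `false` has all angles zero, so it leaves the restricted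
weighted graph state itself. -/
theorem wgs_measure_one_outcome_general (hk : ∀ i, φ i k = φ k i) (x : Bool) :
    (∀ a : Fin n → Bool,
      wgsCoeff (n + 1) φ (k.insertNth x a) =
        (((2 : ℝ) ^ (-(1 : ℝ) / 2) : ℝ) : ℂ) *
          localPhase (fun l => φ (k.succAbove l) k * ind x) a *
          wgsCoeff n (fun i j => φ (k.succAbove i) (k.succAbove j)) a) ∧
    (∀ a : Fin n → Bool,
      wgsCoeff (n + 1) φ (k.insertNth x a) / ((√(1 / 2) : ℝ) : ℂ) =
        localPhase (fun l => φ (k.succAbove l) k * ind x) a *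
          wgsCoeff n (fun i j => φ (k.succAbove i) (k.succAbove j)) a) := by
  have amplitude_ne_zero : (((2 : ℝ) ^ (-(1 : ℝ) / 2) : ℝ) : ℂ) ≠ 0 :=
    Complex.ofReal_ne_zero.mpr (Real.rpow_pos_of_pos two_pos _).ne'
  refine ⟨wgsCoeff_insertNth φ hk x, fun a => ?_⟩
  rw [wgsCoeff_insertNth φ hk, sqrt_one_div_eq_rpow zero_le_two, mul_assoc,
    mul_div_cancel_left₀ _ amplitude_ne_zero]

end Measurement

/-- computational-basis measurement on a WGS, outcome `|1⟩`, and
local-unitary equivalence: with `N = n + 1 ≥ 2` and restricted weights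
`φ' i j = φ (k.succAbove i) (k.succAbove j)`, inserting the value `true` at position `k`
gives `c_φ(a with true at k) = 2^{-1/2} · (∏_l e^{-i φ(k.succAbove l) k [a l]}) · c_{φ'}(a)`;
consequently the renormalized post-measurement state for outcome `true` is obtained from
the `n`-qubit WGS with weights `φ'` by applying to each remaining qubit `l` the diagonal
single-qubit unitary `diag(1, e^{-i φ (k.succAbove l) k})`, i.e. the coefficient at `a`
picks up the phase `∏_l e^{-i φ (k.succAbove l) k [a l]}`. -/
theorem wgs_measure_one_outcome (n : ℕ) (hn : 1 ≤ n)
    (φ : Fin (n + 1) → Fin (n + 1) → ℝ)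
    (hsymm : ∀ i j, φ i j = φ j i) (hdiag : ∀ i, φ i i = 0) (k : Fin (n + 1)) :
    (∀ a : Fin n → Bool,
      wgsCoeff (n + 1) φ (k.insertNth true a) =
        (((2 : ℝ) ^ (-(1 : ℝ) / 2) : ℝ) : ℂ) *
          (∏ l : Fin n,
            Complex.exp (-(Complex.I) * ((φ (k.succAbove l) k * ind (a l) : ℝ) : ℂ))) *
          wgsCoeff n (fun i j => φ (k.succAbove i) (k.succAbove j)) a) ∧
    (∀ a : Fin n → Bool,
      wgsCoeff (n + 1) φ (k.insertNth true a) / ((Real.sqrt (1 / 2) : ℝ) : ℂ) =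
        (∏ l : Fin n,
            Complex.exp (-(Complex.I) * ((φ (k.succAbove l) k * ind (a l) : ℝ) : ℂ))) *
          wgsCoeff n (fun i j => φ (k.succAbove i) (k.succAbove j)) a) := by
  simpa only [localPhase, ind_true, mul_one] using
    wgs_measure_one_outcome_general φ (hsymm · k) true

end
end
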